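/- arXiv:2002.09095 — 3 statements merged into one kernel-verified Lean document; each statement's English description precedes it below -/
import Mathlib

section
/- Let K ≥ 1, α > 0, and take constant step sizes α_k = α/√K for all k ≥ 1. Define weights w_k = ∑_{j=k}^{K} α_j β₁^{j−k} and the averaged iterate x̄^(K) = (∑_{k=1}^{K} w_k x^(k)) / (∑_{k=1}^{K} w_k). Then E[F(x̄^(K))] − F* ≤ ( n·D∞²·G∞ + (α²/(1−β₁)²)·G₁/√(1−β₂) ) / ( 2α·√K·(1−β₁) ). -/
open MeasureTheory Finset

/-!
Fix a comparator `y`. The paired quantity `T k = ⟨x (k+1) - y, m k⟩` satisfies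
`T k = β₁ T (k-1) + (1 - β₁) ⟨x k - y, g k⟩ + ⟨x (k+1) - x k, m k⟩`, and the weights `w k` are the
tail sums that turn `∑ α k T k` into `∑ w k (T k - β₁ T (k-1))`. The optimality condition bounds
`α k T k` by a difference of scaled squared distances, which telescopes because `√v̂` is monotone,
minus `½ ∑ √v̂ (x (k+1) - x k)²`; by Young's inequality the latter absorbs
`w k ⟨x (k+1) - x k, m k⟩` at the cost of `½ w k² ∑ m² / √v̂`. As `|g j| ≤ √v̂ j / √(1 - β₂)`, that
cost is controlled by the moving average of `|g|`, whose expectation is at most `G₁`. Since `w k` is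
deterministic, conditioning on `ℱ k` turns `⟨x k - y, g k⟩` into a subgradient gap, and Jensen's
inequality passes to the averaged iterate.
-/

/-- The exponential moving average of `u 1, u 2, …` with decay rate `β`, started from `0`: the
moment sequences of AMSGrad. The entry `u 0` is ignored. -/
noncomputable def expAvg (β : ℝ) (u : ℕ → ℝ) : ℕ → ℝ
  | 0 => 0
  | k + 1 => β * expAvg β u k + (1 - β) * u (k + 1)

section expAvg

variable {β : ℝ} {u : ℕ → ℝ}

lemma eq_expAvg {a : ℕ → ℝ} (h0 : a 0 = 0)
    (h : ∀ k, a (k + 1) = β * a k + (1 - β) * u (k + 1)) : a = expAvg β u := by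
  funext k
  induction k with
  | zero => exact h0
  | succ k ih => rw [h, ih, expAvg]

lemma expAvg_nonneg (hβ0 : 0 ≤ β) (hβ1 : β ≤ 1) (hu : ∀ j, 0 ≤ u j) (k : ℕ) :
    0 ≤ expAvg β u k := by
  induction k with
  | zero => exact le_rfl
  | succ k ih =>
    exact add_nonneg (mul_nonneg hβ0 ih) (mul_nonneg (sub_nonneg.2 hβ1) (hu _))

lemma expAvg_le {M : ℝ} (hβ0 : 0 ≤ β) (hβ1 : β ≤ 1) (hM : 0 ≤ M) {k : ℕ}
    (hu : ∀ j ∈ Icc 1 k, u j ≤ M) : expAvg β u k ≤ M := by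
  induction k with
  | zero => exact hM
  | succ k ih =>
    have hk := ih fun j hj => hu j (Icc_subset_Icc_right k.le_succ hj)
    have hlast := hu (k + 1) (right_mem_Icc.2 (by omega))
    calc expAvg β u (k + 1) ≤ β * M + (1 - β) * M :=
          add_le_add (mul_le_mul_of_nonneg_left hk hβ0)
            (mul_le_mul_of_nonneg_left hlast (sub_nonneg.2 hβ1))
      _ = M := by ring

lemma abs_expAvg_le (hβ0 : 0 ≤ β) (hβ1 : β ≤ 1) (k : ℕ) :
    |expAvg β u k| ≤ expAvg β (fun j => |u j|) k := by
  induction k with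
  | zero => simp only [expAvg, abs_zero, le_refl]
  | succ k ih =>
    calc |expAvg β u (k + 1)| ≤ |β * expAvg β u k| + |(1 - β) * u (k + 1)| := abs_add_le _ _
      _ = β * |expAvg β u k| + (1 - β) * |u (k + 1)| := by
          rw [abs_mul, abs_mul, abs_of_nonneg hβ0, abs_of_nonneg (sub_nonneg.2 hβ1)]
      _ ≤ expAvg β (fun j => |u j|) (k + 1) :=
          add_le_add_left (mul_le_mul_of_nonneg_left ih hβ0) _

lemma expAvg_sum {ι : Type*} (s : Finset ι) (u : ℕ → ι → ℝ) (k : ℕ) :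
    expAvg β (fun j => ∑ i ∈ s, u j i) k = ∑ i ∈ s, expAvg β (fun j => u j i) k := by
  induction k with
  | zero => simp only [expAvg, sum_const_zero]
  | succ k ih => simp only [expAvg, ih, mul_sum, sum_add_distrib]

variable {Ω : Type*} {mΩ : MeasurableSpace Ω} {μ : Measure Ω} {u : ℕ → Ω → ℝ} {k : ℕ}

lemma integrable_expAvg (hu : ∀ j ∈ Icc 1 k, Integrable (u j) μ) :
    Integrable (fun ω => expAvg β (fun j => u j ω) k) μ := by
  induction k with
  | zero => exact integrable_zero _ _ _
  | succ k ih =>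
    exact ((ih fun j hj => hu j (Icc_subset_Icc_right k.le_succ hj)).const_mul β).add
      ((hu (k + 1) (right_mem_Icc.2 (by omega))).const_mul (1 - β))

lemma integral_expAvg (hu : ∀ j ∈ Icc 1 k, Integrable (u j) μ) :
    ∫ ω, expAvg β (fun j => u j ω) k ∂μ = expAvg β (fun j => ∫ ω, u j ω ∂μ) k := by
  induction k with
  | zero => exact integral_zero _ _
  | succ k ih =>
    have hk : ∀ j ∈ Icc 1 k, Integrable (u j) μ :=
      fun j hj => hu j (Icc_subset_Icc_right k.le_succ hj)
    simp only [expAvg]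
    rw [integral_add ((integrable_expAvg hk).const_mul β)
      ((hu (k + 1) (right_mem_Icc.2 (by omega))).const_mul (1 - β)),
      integral_const_mul, integral_const_mul, ih hk]

end expAvg

lemma eq_partialSups {α : Type*} [SemilatticeSup α] {a f : ℕ → α} (h0 : a 0 = f 0)
    (h : ∀ k, a (k + 1) = a k ⊔ f (k + 1)) : a = partialSups f := by
  funext k
  induction k with
  | zero => rw [h0, partialSups_zero]
  | succ k ih => rw [h, ih, partialSups_add_one]

/-- The AMSGrad scaling `√v̂` generated by the gradient coordinates `u 1, u 2, …`: `v` is the moving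
average of `u ^ 2` and `v̂` its running maximum. -/
noncomputable def amsgradScale (β : ℝ) (u : ℕ → ℝ) (k : ℕ) : ℝ :=
  √(partialSups (expAvg β fun j => u j ^ 2) k)

section amsgradScale

variable {β : ℝ} {u : ℕ → ℝ}

lemma sqrt_eq_amsgradScale {v vhat : ℕ → ℝ} (hv0 : v 0 = 0) (hvhat0 : vhat 0 = 0)
    (hv : ∀ k, v (k + 1) = β * v k + (1 - β) * u (k + 1) ^ 2)
    (hvhat : ∀ k, vhat (k + 1) = max (vhat k) (v (k + 1))) (k : ℕ) :
    √(vhat k) = amsgradScale β u k := by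
  rw [eq_partialSups (hvhat0.trans hv0.symm) hvhat, eq_expAvg (u := fun j => u j ^ 2) hv0 hv,
    amsgradScale]

lemma amsgradScale_zero : amsgradScale β u 0 = 0 := by
  simp only [amsgradScale, partialSups_zero, expAvg, Real.sqrt_zero]

lemma amsgradScale_nonneg (k : ℕ) : 0 ≤ amsgradScale β u k := Real.sqrt_nonneg _

lemma amsgradScale_monotone : Monotone (amsgradScale β u) :=
  fun _ _ h => Real.sqrt_le_sqrt ((partialSups _).monotone h)

lemma sqrt_mul_abs_le_amsgradScale (hβ0 : 0 ≤ β) (hβ1 : β ≤ 1) {k : ℕ} (hk : 1 ≤ k) :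
    √(1 - β) * |u k| ≤ amsgradScale β u k := by
  obtain ⟨k, rfl⟩ := Nat.exists_eq_add_of_le' hk
  have hv : 0 ≤ β * expAvg β (fun j => u j ^ 2) k :=
    mul_nonneg hβ0 (expAvg_nonneg hβ0 hβ1 (fun _ => sq_nonneg _) k)
  rw [← Real.sqrt_sq_eq_abs, ← Real.sqrt_mul (sub_nonneg.2 hβ1)]
  refine Real.sqrt_le_sqrt (le_trans ?_ (le_partialSups _ (k + 1)))
  exact le_add_of_nonneg_left hv

lemma amsgradScale_le {G : ℝ} (hβ0 : 0 ≤ β) (hβ1 : β ≤ 1) (hG : 0 ≤ G) {k : ℕ}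
    (hu : ∀ j ∈ Icc 1 k, |u j| ≤ G) : amsgradScale β u k ≤ G := by
  refine (Real.sqrt_le_left hG).2 (partialSups_le _ _ _ fun j hj => ?_)
  exact expAvg_le hβ0 hβ1 (sq_nonneg G) fun l hl =>
    sq_le_sq' (abs_le.1 (hu l (Icc_subset_Icc_right hj hl))).1
      (abs_le.1 (hu l (Icc_subset_Icc_right hj hl))).2

lemma sq_expAvg_le {β₁ β₂ : ℝ} (hβ₁0 : 0 ≤ β₁) (hβ₁1 : β₁ ≤ 1) (hβ₂0 : 0 ≤ β₂) (hβ₂1 : β₂ < 1)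
    (k : ℕ) : expAvg β₁ u k ^ 2
      ≤ amsgradScale β₂ u k * (expAvg β₁ (fun j => |u j|) k / √(1 - β₂)) := by
  have hc : 0 < √(1 - β₂) := Real.sqrt_pos.2 (sub_pos.2 hβ₂1)
  have hnonneg := expAvg_nonneg hβ₁0 hβ₁1 (fun j => abs_nonneg (u j)) k
  have hscale : expAvg β₁ (fun j => |u j|) k ≤ amsgradScale β₂ u k / √(1 - β₂) := by
    refine expAvg_le hβ₁0 hβ₁1 (div_nonneg (amsgradScale_nonneg k) hc.le) fun j hj => ?_
    rw [mem_Icc] at hj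
    rw [le_div_iff₀' hc]
    exact (sqrt_mul_abs_le_amsgradScale hβ₂0 hβ₂1.le hj.1).trans (amsgradScale_monotone hj.2)
  calc expAvg β₁ u k ^ 2 = |expAvg β₁ u k| ^ 2 := (sq_abs _).symm
    _ ≤ expAvg β₁ (fun j => |u j|) k ^ 2 :=
        pow_le_pow_left₀ (abs_nonneg _) (abs_expAvg_le hβ₁0 hβ₁1 k) 2
    _ ≤ amsgradScale β₂ u k / √(1 - β₂) * expAvg β₁ (fun j => |u j|) k := by
        rw [sq]; exact mul_le_mul_of_nonneg_right hscale hnonneg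
    _ = _ := by ring

end amsgradScale

/-- The averaging weight `w_k = ∑_{j=k}^K α_j β^{j-k}` of the paper. -/
noncomputable def tailWeight (β : ℝ) (α : ℕ → ℝ) (K k : ℕ) : ℝ :=
  ∑ j ∈ Icc k K, α j * β ^ (j - k)

section tailWeight

variable {β : ℝ} {α : ℕ → ℝ} {K k : ℕ}

lemma tailWeight_of_lt (hk : K < k) : tailWeight β α K k = 0 := by
  rw [tailWeight, Icc_eq_empty_of_lt hk, sum_empty]

lemma tailWeight_eq_add (hk : k ≤ K) :
    tailWeight β α K k = α k + β * tailWeight β α K (k + 1) := by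
  rw [tailWeight, tailWeight, ← add_sum_Ioc_eq_sum_Icc hk, ← Icc_add_one_left_eq_Ioc, Nat.sub_self,
    pow_zero, mul_one, mul_sum]
  refine congrArg (α k + ·) (sum_congr rfl fun j hj => ?_)
  rw [show j - k = j - (k + 1) + 1 by grind, pow_succ]
  ring

lemma le_tailWeight (hβ : 0 ≤ β) (hα : ∀ j ∈ Icc k K, 0 ≤ α j) (hk : k ≤ K) :
    α k ≤ tailWeight β α K k := by
  have h := single_le_sum (f := fun j => α j * β ^ (j - k))
    (fun j hj => mul_nonneg (hα j hj) (pow_nonneg hβ _)) (left_mem_Icc.2 hk)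
  simpa only [tailWeight, Nat.sub_self, pow_zero, mul_one] using h

lemma tailWeight_pos (hβ : 0 ≤ β) (hα : ∀ j ∈ Icc k K, 0 < α j) (hk : k ≤ K) :
    0 < tailWeight β α K k :=
  (hα k (left_mem_Icc.2 hk)).trans_le (le_tailWeight hβ (fun j hj => (hα j hj).le) hk)

lemma tailWeight_le {a : ℝ} (hβ0 : 0 ≤ β) (hβ1 : β < 1) (ha : 0 ≤ a)
    (hα : ∀ j ∈ Icc k K, α j ≤ a) : tailWeight β α K k ≤ a / (1 - β) := by
  have hgeom : ∑ j ∈ range (K + 1 - k), β ^ j ≤ (1 - β)⁻¹ :=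
    tsum_geometric_of_lt_one hβ0 hβ1 ▸ (summable_geometric_of_lt_one hβ0 hβ1).sum_le_tsum _
      fun j _ => pow_nonneg hβ0 j
  calc tailWeight β α K k ≤ ∑ j ∈ Icc k K, a * β ^ (j - k) :=
        sum_le_sum fun j hj => mul_le_mul_of_nonneg_right (hα j hj) (pow_nonneg hβ0 _)
    _ = a * ∑ j ∈ range (K + 1 - k), β ^ j := by
        rw [← mul_sum, ← Ico_add_one_right_eq_Icc, sum_Ico_eq_sum_range]
        simp only [Nat.add_sub_cancel_left]
    _ ≤ a / (1 - β) := mul_le_mul_of_nonneg_left hgeom ha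

lemma sum_mul_eq_sum_tailWeight_mul {T u : ℕ → ℝ} (hT0 : T 0 = 0)
    (hT : ∀ k, T (k + 1) = β * T k + u (k + 1)) :
    ∑ k ∈ Icc 1 K, α k * T k = ∑ k ∈ Icc 1 K, tailWeight β α K k * u k := by
  -- Summation by parts: the tail weights satisfy the recursion dual to that of `T` and vanish at
  -- `K + 1`.
  have partial_sum : ∀ L ≤ K, ∑ k ∈ Icc 1 L, tailWeight β α K k * u k
      = ∑ k ∈ Icc 1 L, α k * T k + β * tailWeight β α K (L + 1) * T L := by
    intro L hL
    induction L with
    | zero => simp only [zero_lt_one, Icc_eq_empty_of_lt, sum_empty, hT0, mul_zero, add_zero]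
    | succ L ih =>
      rw [sum_Icc_succ_top (by omega), sum_Icc_succ_top (by omega), ih (by omega),
        tailWeight_eq_add hL, hT]
      ring
  rw [partial_sum K le_rfl, tailWeight_of_lt K.lt_succ_self, mul_zero, zero_mul, add_zero]

section constantStep

variable {a : ℝ}

lemma mul_sqrt_le_sum_tailWeight (hβ : 0 ≤ β) (ha : 0 ≤ a) (hα : ∀ k ∈ Icc 1 K, α k = a / √K) :
    a * √K ≤ ∑ k ∈ Icc 1 K, tailWeight β α K k := by
  have hweight : ∀ k ∈ Icc 1 K, a / √K ≤ tailWeight β α K k := fun k hk => by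
    rw [← hα k hk]
    refine le_tailWeight hβ (fun j hj => ?_) (mem_Icc.1 hk).2
    rw [hα j (Icc_subset_Icc_left (mem_Icc.1 hk).1 hj)]
    positivity
  calc a * √K = K * (a / √K) := by rw [mul_div_left_comm, Real.div_sqrt]
    _ = #(Icc 1 K) • (a / √K) := by rw [Nat.card_Icc, Nat.add_sub_cancel, nsmul_eq_mul]
    _ ≤ ∑ k ∈ Icc 1 K, tailWeight β α K k := card_nsmul_le_sum _ _ _ hweight

lemma sum_tailWeight_sq_le (hβ0 : 0 ≤ β) (hβ1 : β < 1) (ha : 0 ≤ a)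
    (hα : ∀ k ∈ Icc 1 K, α k = a / √K) :
    ∑ k ∈ Icc 1 K, tailWeight β α K k ^ 2 ≤ a ^ 2 / (1 - β) ^ 2 := by
  have hstep : 0 ≤ a / √K := by positivity
  have hweight : ∀ k ∈ Icc 1 K, tailWeight β α K k ^ 2 ≤ (a / √K / (1 - β)) ^ 2 := fun k hk => by
    have hαk : ∀ j ∈ Icc k K, α j = a / √K := fun j hj =>
      hα j (Icc_subset_Icc_left (mem_Icc.1 hk).1 hj)
    have hnonneg : 0 ≤ tailWeight β α K k :=
      sum_nonneg fun j hj => mul_nonneg (hstep.trans_eq (hαk j hj).symm) (pow_nonneg hβ0 _)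
    exact pow_le_pow_left₀ hnonneg (tailWeight_le hβ0 hβ1 hstep fun j hj => (hαk j hj).le) 2
  calc ∑ k ∈ Icc 1 K, tailWeight β α K k ^ 2
      ≤ #(Icc 1 K) • (a / √K / (1 - β)) ^ 2 := sum_le_card_nsmul _ _ _ hweight
    _ = K / K * (a ^ 2 / (1 - β) ^ 2) := by
        rw [Nat.card_Icc, Nat.add_sub_cancel, nsmul_eq_mul, div_pow, div_pow,
          Real.sq_sqrt K.cast_nonneg]
        ring
    _ ≤ a ^ 2 / (1 - β) ^ 2 := mul_le_of_le_one_left (by positivity) (div_self_le_one _)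

lemma div_sum_tailWeight_le (hβ : β ∈ Set.Ico 0 1) (hK : 1 ≤ K) (ha : 0 < a)
    (hα : ∀ k ∈ Icc 1 K, α k = a / √K) {A B : ℝ} (hA : 0 ≤ A) (hB : 0 ≤ B) :
    (A + (∑ k ∈ Icc 1 K, tailWeight β α K k ^ 2) * B)
        / (2 * (1 - β) * ∑ k ∈ Icc 1 K, tailWeight β α K k)
      ≤ (A + a ^ 2 / (1 - β) ^ 2 * B) / (2 * a * √K * (1 - β)) := by
  have h1β : 0 < 1 - β := sub_pos.2 hβ.2
  have : 0 < √(K : ℝ) := Real.sqrt_pos.2 (by exact_mod_cast hK)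
  rw [show 2 * a * √K * (1 - β) = 2 * (1 - β) * (a * √K) by ring]
  gcongr
  · exact sum_tailWeight_sq_le hβ.1 hβ.2 ha.le hα
  · exact mul_sqrt_le_sum_tailWeight hβ.1 ha.le hα

end constantStep

end tailWeight

section pathwise

lemma sum_mul_sub_le {s e : ℕ → ℝ} {M : ℝ} {K : ℕ} (hs0 : s 0 = 0) (hs : Monotone s)
    (he0 : ∀ k, 0 ≤ e k) (heM : ∀ k ∈ Icc 1 K, e k ≤ M) :
    ∑ k ∈ Icc 1 K, s k * (e k - e (k + 1)) ≤ s K * M := by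
  have sharp : ∀ L ≤ K, ∑ k ∈ Icc 1 L, s k * (e k - e (k + 1)) ≤ s L * (M - e (L + 1)) := by
    intro L hL
    induction L with
    | zero => simp only [zero_lt_one, Icc_eq_empty_of_lt, sum_empty, hs0, zero_mul, le_refl]
    | succ L ih =>
      have hgap : 0 ≤ M - e (L + 1) := sub_nonneg.2 (heM _ (mem_Icc.2 ⟨by omega, hL⟩))
      rw [sum_Icc_succ_top (by omega)]
      linarith [ih (by omega), mul_le_mul_of_nonneg_right (hs L.le_succ) hgap]
  have hsK : 0 ≤ s K := hs0 ▸ hs K.zero_le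
  exact (sharp K le_rfl).trans (mul_le_mul_of_nonneg_left (sub_le_self _ (he0 _)) hsK)

lemma neg_mul_sub_half_mul_sq_le {w d m s R : ℝ} (hs : 0 ≤ s) (hR : 0 ≤ R) (h : m ^ 2 ≤ s * R) :
    -(w * (d * m)) - s * d ^ 2 / 2 ≤ w ^ 2 * R / 2 := by
  rcases hs.eq_or_lt with rfl | hs
  · have hm : m = 0 := by
      rw [zero_mul] at h
      exact pow_eq_zero_iff two_ne_zero |>.1 (h.antisymm (sq_nonneg m))
    rw [hm, mul_zero, mul_zero, neg_zero, zero_mul, zero_div, sub_zero]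
    positivity
  · have hsq : 0 ≤ s * (w ^ 2 * R / 2 + w * (d * m) + s * d ^ 2 / 2) := by
      linarith [sq_nonneg (w * m + s * d), mul_le_mul_of_nonneg_left h (sq_nonneg w)]
    linarith [nonneg_of_mul_nonneg_right hsq hs]

variable {ι : Type*} [Fintype ι]

lemma step_le_of_optimality {a w : ℝ} {x x' y m s R : ι → ℝ} (hs : ∀ i, 0 ≤ s i)
    (hR : ∀ i, 0 ≤ R i) (hm : ∀ i, m i ^ 2 ≤ s i * R i)
    (hopt : ∑ i, (x' i - y i) * (s i * (x' i - x i) + a * m i) ≤ 0) :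
    a * ∑ i, (x' i - y i) * m i - w * ∑ i, (x' i - x i) * m i
      ≤ (∑ i, s i * ((x i - y i) ^ 2 - (x' i - y i) ^ 2)) / 2 + w ^ 2 * (∑ i, R i) / 2 := by
  have hyoung := sum_le_sum fun i (_ : i ∈ univ) =>
    neg_mul_sub_half_mul_sq_le (w := w) (d := x' i - x i) (hs i) (hR i) (hm i)
  have hsplit : a * ∑ i, (x' i - y i) * m i - w * ∑ i, (x' i - x i) * m i
      = ∑ i, (x' i - y i) * (s i * (x' i - x i) + a * m i)
        + (∑ i, s i * ((x i - y i) ^ 2 - (x' i - y i) ^ 2)) / 2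
        + ∑ i, (-(w * ((x' i - x i) * m i)) - s i * (x' i - x i) ^ 2 / 2) := by
    simp only [mul_sum, sum_div, ← sum_add_distrib, ← sum_sub_distrib]
    exact sum_congr rfl fun i _ => by ring
  rw [← sum_div, ← mul_sum] at hyoung
  linarith

variable {β₁ β₂ D G : ℝ} {α : ℕ → ℝ} {g x : ℕ → ι → ℝ} {y : ι → ℝ} {K : ℕ}

lemma sum_mul_expAvg_eq :
    ∑ k ∈ Icc 1 K, α k * ∑ i, (x (k + 1) i - y i) * expAvg β₁ (fun j => g j i) k
      = (1 - β₁) * ∑ k ∈ Icc 1 K, tailWeight β₁ α K k * ∑ i, (x k i - y i) * g k i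
        + ∑ k ∈ Icc 1 K, tailWeight β₁ α K k *
          ∑ i, (x (k + 1) i - x k i) * expAvg β₁ (fun j => g j i) k := by
  rw [sum_mul_eq_sum_tailWeight_mul (β := β₁)
    (u := fun k => (1 - β₁) * ∑ i, (x k i - y i) * g k i
      + ∑ i, (x (k + 1) i - x k i) * expAvg β₁ (fun j => g j i) k)]
  · rw [mul_sum, ← sum_add_distrib]
    exact sum_congr rfl fun k _ => by ring
  · simp only [expAvg, mul_zero, sum_const_zero]
  · intro k
    simp only [expAvg, mul_sum, ← sum_add_distrib]
    exact sum_congr rfl fun i _ => by ring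

lemma sum_amsgradScale_mul_sub_le (hβ₂0 : 0 ≤ β₂) (hβ₂1 : β₂ ≤ 1) (hG : 0 ≤ G)
    (hg : ∀ k ∈ Icc 1 K, ‖g k‖ ≤ G) (hx : ∀ k ∈ Icc 1 K, ‖x k - y‖ ≤ D) :
    ∑ k ∈ Icc 1 K, ∑ i, amsgradScale β₂ (fun j => g j i) k *
        ((x k i - y i) ^ 2 - (x (k + 1) i - y i) ^ 2)
      ≤ Fintype.card ι * D ^ 2 * G := by
  rw [sum_comm, mul_assoc, ← nsmul_eq_mul]
  refine sum_le_card_nsmul _ _ _ fun i _ => ?_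
  have hdist : ∀ k ∈ Icc 1 K, (x k i - y i) ^ 2 ≤ D ^ 2 := fun k hk =>
    sq_le_sq' (abs_le.1 ((norm_le_pi_norm (x k - y) i).trans (hx k hk))).1
      (abs_le.1 ((norm_le_pi_norm (x k - y) i).trans (hx k hk))).2
  calc _ ≤ amsgradScale β₂ (fun j => g j i) K * D ^ 2 :=
        sum_mul_sub_le (e := fun k => (x k i - y i) ^ 2) amsgradScale_zero amsgradScale_monotone
          (fun _ => sq_nonneg _) hdist
    _ ≤ G * D ^ 2 := mul_le_mul_of_nonneg_right (amsgradScale_le hβ₂0 hβ₂1 hG fun j hj =>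
        (norm_le_pi_norm (g j) i).trans (hg j hj)) (sq_nonneg D)
    _ = D ^ 2 * G := mul_comm _ _

theorem weighted_regret_le (hβ₁ : β₁ ∈ Set.Ico 0 1) (hβ₂ : β₂ ∈ Set.Ico 0 1) (hG : 0 ≤ G)
    (hg : ∀ k ∈ Icc 1 K, ‖g k‖ ≤ G) (hx : ∀ k ∈ Icc 1 K, ‖x k - y‖ ≤ D)
    (hopt : ∀ k ∈ Icc 1 K, ∑ i, (x (k + 1) i - y i) *
      (amsgradScale β₂ (fun j => g j i) k * (x (k + 1) i - x k i)
        + α k * expAvg β₁ (fun j => g j i) k) ≤ 0) :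
    (1 - β₁) * ∑ k ∈ Icc 1 K, tailWeight β₁ α K k * ∑ i, (x k i - y i) * g k i
      ≤ (Fintype.card ι * D ^ 2 * G + ∑ k ∈ Icc 1 K, tailWeight β₁ α K k ^ 2 *
          (expAvg β₁ (fun j => ∑ i, |g j i|) k / √(1 - β₂))) / 2 := by
  obtain ⟨hβ₁0, hβ₁1⟩ := hβ₁
  obtain ⟨hβ₂0, hβ₂1⟩ := hβ₂
  have hstep := sum_le_sum fun k hk => step_le_of_optimality (w := tailWeight β₁ α K k)
    (fun i => amsgradScale_nonneg k)
    (fun i => div_nonneg (expAvg_nonneg hβ₁0 hβ₁1.le (fun j => abs_nonneg (g j i)) k)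
      (Real.sqrt_nonneg (1 - β₂)))
    (fun i => sq_expAvg_le hβ₁0 hβ₁1.le hβ₂0 hβ₂1 k) (hopt k hk)
  have htele := sum_amsgradScale_mul_sub_le hβ₂0 hβ₂1.le hG hg hx
  rw [sum_sub_distrib, sum_mul_expAvg_eq, sum_add_distrib, ← sum_div, ← sum_div] at hstep
  simp only [← sum_div, ← expAvg_sum] at hstep
  linarith

end pathwise

section expectation

variable {Ω : Type*} {mΩ : MeasurableSpace Ω} {μ : Measure Ω}

lemma centerMass_pi {ι κ : Type*} (t : Finset κ) (w : κ → ℝ) (z : κ → ι → ℝ) :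
    t.centerMass w z = fun i => (∑ k ∈ t, w k * z k i) / ∑ k ∈ t, w k := by
  funext i
  simp only [centerMass, Pi.smul_apply, Finset.sum_apply, smul_eq_mul,
    div_eq_inv_mul]

lemma integrable_comp_of_mem_isCompact {E : Type*} [TopologicalSpace E] [IsFiniteMeasure μ]
    {s : Set E} (hs : IsCompact s) {f : E → ℝ} (hf : Continuous f) {z : Ω → E}
    (hz : AEStronglyMeasurable z μ) (hzs : ∀ᵐ ω ∂μ, z ω ∈ s) :
    Integrable (fun ω => f (z ω)) μ := by
  obtain ⟨M, hM⟩ := hs.exists_bound_of_continuousOn hf.continuousOn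
  exact Integrable.of_bound (hf.comp_aestronglyMeasurable hz) M (hzs.mono fun ω h => hM _ h)

lemma aestronglyMeasurable_centerMass {E κ : Type*} [AddCommGroup E] [Module ℝ E]
    [TopologicalSpace E] [ContinuousAdd E] [ContinuousConstSMul ℝ E] {t : Finset κ} {w : κ → ℝ}
    {z : κ → Ω → E} (hz : ∀ k ∈ t, AEStronglyMeasurable (z k) μ) :
    AEStronglyMeasurable (fun ω => t.centerMass w fun k => z k ω) μ :=
  (Finset.aestronglyMeasurable_fun_sum t fun k hk => (hz k hk).const_smul (w k)).const_smul _

lemma integral_comp_centerMass_le {E κ : Type*} [AddCommGroup E] [Module ℝ E] {s : Set E}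
    {f : E → ℝ} (hf : ConvexOn ℝ s f) {t : Finset κ} {w : κ → ℝ} (hw : ∀ k ∈ t, 0 ≤ w k)
    (hw_pos : 0 < ∑ k ∈ t, w k) {z : κ → Ω → E} (hzs : ∀ᵐ ω ∂μ, ∀ k ∈ t, z k ω ∈ s)
    (hfz : ∀ k ∈ t, Integrable (fun ω => f (z k ω)) μ)
    (hfavg : Integrable (fun ω => f (t.centerMass w fun k => z k ω)) μ) :
    ∫ ω, f (t.centerMass w fun k => z k ω) ∂μ
      ≤ t.centerMass w fun k => ∫ ω, f (z k ω) ∂μ := by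
  have hsmul : ∀ k ∈ t, Integrable (fun ω => w k • f (z k ω)) μ :=
    fun k hk => (hfz k hk).smul (w k)
  have hcenter : Integrable (fun ω => t.centerMass w fun k => f (z k ω)) μ :=
    (integrable_finsetSum t hsmul).smul (∑ k ∈ t, w k)⁻¹
  calc ∫ ω, f (t.centerMass w fun k => z k ω) ∂μ
      ≤ ∫ ω, t.centerMass w (fun k => f (z k ω)) ∂μ :=
        integral_mono_ae hfavg hcenter
          (hzs.mono fun ω h => hf.map_centerMass_le hw hw_pos h)
    _ = t.centerMass w fun k => ∫ ω, f (z k ω) ∂μ := by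
        simp only [centerMass, integral_smul, integral_finsetSum t hsmul]

theorem integral_comp_centerMass_sub_le {E κ : Type*} [NormedAddCommGroup E] [NormedSpace ℝ E]
    [FiniteDimensional ℝ E] [IsProbabilityMeasure μ] {s : Set E} (hs : IsCompact s)
    (hs_convex : Convex ℝ s) {f : E → ℝ} (hf : ConvexOn ℝ Set.univ f) {t : Finset κ} {w r : κ → ℝ}
    (hw : ∀ k ∈ t, 0 ≤ w k) (hw_pos : 0 < ∑ k ∈ t, w k) {z : κ → Ω → E} {c : ℝ}
    (hz : ∀ k ∈ t, AEStronglyMeasurable (z k) μ) (hzs : ∀ k ∈ t, ∀ᵐ ω ∂μ, z k ω ∈ s)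
    (hgap : ∀ k ∈ t, ∫ ω, f (z k ω) ∂μ - c ≤ r k) :
    ∫ ω, f (t.centerMass w fun k => z k ω) ∂μ - c ≤ (∑ k ∈ t, w k * r k) / ∑ k ∈ t, w k := by
  have hf_cont : Continuous f := continuousOn_univ.1 (hf.continuousOn isOpen_univ)
  have hzs_all := (ae_ball_iff t.countable_toSet).2 hzs
  have hjensen := integral_comp_centerMass_le (hf.subset s.subset_univ hs_convex) hw hw_pos hzs_all
    (fun k hk => integrable_comp_of_mem_isCompact hs hf_cont (hz k hk) (hzs k hk))
    (integrable_comp_of_mem_isCompact hs hf_cont (aestronglyMeasurable_centerMass hz)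
      (hzs_all.mono fun ω h => hs_convex.centerMass_mem hw hw_pos h))
  calc ∫ ω, f (t.centerMass w fun k => z k ω) ∂μ - c
      ≤ t.centerMass w (fun k => ∫ ω, f (z k ω) ∂μ) - c := sub_le_sub_right hjensen c
    _ = (∑ k ∈ t, w k * (∫ ω, f (z k ω) ∂μ - c)) / ∑ k ∈ t, w k := by
        simp only [centerMass, smul_eq_mul, mul_sub, sum_sub_distrib, ← sum_mul]
        field_simp
    _ ≤ (∑ k ∈ t, w k * r k) / ∑ k ∈ t, w k :=
        div_le_div_of_nonneg_right
          (sum_le_sum fun k hk => mul_le_mul_of_nonneg_left (hgap k hk) (hw k hk)) hw_pos.le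

variable {ι : Type*} [Fintype ι] {y : ι → ℝ} {D G G₁ β₁ β₂ : ℝ}

lemma integrable_coord_sub_mul {g z : Ω → ι → ℝ}
    (hz : AEStronglyMeasurable z μ) (hzD : ∀ᵐ ω ∂μ, ‖z ω - y‖ ≤ D)
    (hg : ∀ i, Integrable (fun ω => g ω i) μ) (i : ι) :
    Integrable (fun ω => (z ω i - y i) * g ω i) μ :=
  (hg i).bdd_mul (c := D)
    (((continuous_apply i).sub continuous_const).comp_aestronglyMeasurable hz)
    (hzD.mono fun ω h => (norm_le_pi_norm (z ω - y) i).trans h)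

section condExp

variable {m : MeasurableSpace Ω}

lemma integrable_mul_condExp {u h : Ω → ℝ} (hu : StronglyMeasurable[m] u)
    (huh : Integrable (u * h) μ) (hh : Integrable h μ) : Integrable (u * μ[h|m]) μ :=
  integrable_condExp.congr (condExp_mul_of_stronglyMeasurable_left hu huh hh)

lemma integral_mul_condExp (hm : m ≤ mΩ) [SigmaFinite (μ.trim hm)] {u h : Ω → ℝ}
    (hu : StronglyMeasurable[m] u) (huh : Integrable (u * h) μ) (hh : Integrable h μ) :
    ∫ ω, (u * μ[h|m]) ω ∂μ = ∫ ω, (u * h) ω ∂μ := by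
  rw [← integral_condExp hm (f := u * h)]
  exact integral_congr_ae (condExp_mul_of_stronglyMeasurable_left hu huh hh).symm

theorem integral_sub_le_of_condExp_subgradient [IsProbabilityMeasure μ] (hm : m ≤ mΩ)
    {g z : Ω → ι → ℝ} {F : (ι → ℝ) → ℝ} (hz : Measurable[m] z) (hzD : ∀ᵐ ω ∂μ, ‖z ω - y‖ ≤ D)
    (hg : ∀ i, Integrable (fun ω => g ω i) μ) (hF : Integrable (fun ω => F (z ω)) μ)
    (hsub : ∀ᵐ ω ∂μ, F (z ω) + ∑ i, (μ[fun ω' => g ω' i | m]) ω * (y i - z ω i) ≤ F y) :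
    ∫ ω, F (z ω) ∂μ - F y ≤ ∫ ω, ∑ i, (z ω i - y i) * g ω i ∂μ := by
  have hu : ∀ i, StronglyMeasurable[m] fun ω => z ω i - y i := fun i =>
    (((measurable_pi_apply i).comp hz).sub_const (y i)).stronglyMeasurable
  have hug := integrable_coord_sub_mul (hz.mono hm le_rfl).aestronglyMeasurable hzD hg
  have hucond : ∀ i ∈ univ, Integrable (fun ω => (z ω i - y i) * (μ[fun ω' => g ω' i | m]) ω) μ :=
    fun i _ => integrable_mul_condExp (hu i) (hug i) (hg i)
  calc ∫ ω, F (z ω) ∂μ - F y = ∫ ω, (F (z ω) - F y) ∂μ := by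
        rw [integral_sub hF (integrable_const _), integral_const, probReal_univ, one_smul]
    _ ≤ ∫ ω, ∑ i, (z ω i - y i) * (μ[fun ω' => g ω' i | m]) ω ∂μ := by
        refine integral_mono_ae (hF.sub (integrable_const _)) (integrable_finsetSum _ hucond) ?_
        filter_upwards [hsub] with ω h
        have hneg : ∑ i, (μ[fun ω' => g ω' i | m]) ω * (y i - z ω i)
            = -∑ i, (z ω i - y i) * (μ[fun ω' => g ω' i | m]) ω := by
          rw [← sum_neg_distrib]
          exact sum_congr rfl fun i _ => by ring
        linarith
    _ = ∫ ω, ∑ i, (z ω i - y i) * g ω i ∂μ := by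
        rw [integral_finsetSum _ hucond, integral_finsetSum _ fun i _ => hug i]
        exact sum_congr rfl fun i _ => integral_mul_condExp hm (hu i) (hug i) (hg i)

end condExp

variable {α : ℕ → ℝ} {g x : ℕ → Ω → ι → ℝ} {K : ℕ}

theorem weighted_integral_regret_le [IsProbabilityMeasure μ] (hβ₁ : β₁ ∈ Set.Ico 0 1)
    (hβ₂ : β₂ ∈ Set.Ico 0 1) (hG : 0 ≤ G) (hG₁ : 0 ≤ G₁)
    (hgint : ∀ k ∈ Icc 1 K, ∀ i, Integrable (fun ω => g k ω i) μ)
    (hxmeas : ∀ k ∈ Icc 1 K, AEStronglyMeasurable (x k) μ)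
    (hg : ∀ k ∈ Icc 1 K, ∀ᵐ ω ∂μ, ‖g k ω‖ ≤ G)
    (hgG₁ : ∀ k ∈ Icc 1 K, ∫ ω, ∑ i, |g k ω i| ∂μ ≤ G₁)
    (hx : ∀ k ∈ Icc 1 K, ∀ᵐ ω ∂μ, ‖x k ω - y‖ ≤ D)
    (hopt : ∀ k ∈ Icc 1 K, ∀ᵐ ω ∂μ, ∑ i, (x (k + 1) ω i - y i) *
      (amsgradScale β₂ (fun j => g j ω i) k * (x (k + 1) ω i - x k ω i)
        + α k * expAvg β₁ (fun j => g j ω i) k) ≤ 0) :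
    (1 - β₁) * ∑ k ∈ Icc 1 K, tailWeight β₁ α K k * ∫ ω, ∑ i, (x k ω i - y i) * g k ω i ∂μ
      ≤ (Fintype.card ι * D ^ 2 * G
          + (∑ k ∈ Icc 1 K, tailWeight β₁ α K k ^ 2) * (G₁ / √(1 - β₂))) / 2 := by
  have hl1int : ∀ k ∈ Icc 1 K, Integrable (fun ω => ∑ i, |g k ω i|) μ := fun k hk =>
    integrable_finsetSum _ fun i _ => (hgint k hk i).abs
  have hregret : ∀ k ∈ Icc 1 K,
      Integrable (fun ω => tailWeight β₁ α K k * ∑ i, (x k ω i - y i) * g k ω i) μ := fun k hk =>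
    (integrable_finsetSum _ fun i _ =>
      integrable_coord_sub_mul (hxmeas k hk) (hx k hk) (hgint k hk) i).const_mul _
  have hcost : ∀ k ∈ Icc 1 K, Integrable (fun ω => tailWeight β₁ α K k ^ 2 *
      (expAvg β₁ (fun j => ∑ i, |g j ω i|) k / √(1 - β₂))) μ := fun k hk =>
    ((integrable_expAvg fun j hj => hl1int j
      (Icc_subset_Icc_right (mem_Icc.1 hk).2 hj)).div_const _).const_mul _
  calc (1 - β₁) * ∑ k ∈ Icc 1 K, tailWeight β₁ α K k * ∫ ω, ∑ i, (x k ω i - y i) * g k ω i ∂μ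
      = ∫ ω, (1 - β₁) *
          ∑ k ∈ Icc 1 K, tailWeight β₁ α K k * ∑ i, (x k ω i - y i) * g k ω i ∂μ := by
        rw [integral_const_mul, integral_finsetSum _ hregret]
        simp only [integral_const_mul]
    _ ≤ ∫ ω, (Fintype.card ι * D ^ 2 * G + ∑ k ∈ Icc 1 K, tailWeight β₁ α K k ^ 2 *
          (expAvg β₁ (fun j => ∑ i, |g j ω i|) k / √(1 - β₂))) / 2 ∂μ := by
        refine integral_mono_ae ((integrable_finsetSum _ hregret).const_mul _)
          (((integrable_const _).add (integrable_finsetSum _ hcost)).div_const 2) ?_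
        filter_upwards [(ae_ball_iff (Icc 1 K).countable_toSet).2 hg,
          (ae_ball_iff (Icc 1 K).countable_toSet).2 hx,
          (ae_ball_iff (Icc 1 K).countable_toSet).2 hopt] with ω hgω hxω hoptω
        exact weighted_regret_le hβ₁ hβ₂ hG hgω hxω hoptω
    _ = (Fintype.card ι * D ^ 2 * G + ∑ k ∈ Icc 1 K, ∫ ω, tailWeight β₁ α K k ^ 2 *
          (expAvg β₁ (fun j => ∑ i, |g j ω i|) k / √(1 - β₂)) ∂μ) / 2 := by
        rw [integral_div, integral_add (integrable_const _) (integrable_finsetSum _ hcost),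
          integral_finsetSum _ hcost, integral_const, probReal_univ, one_smul]
    _ ≤ _ := by
        rw [sum_mul]
        gcongr with k hk
        rw [integral_const_mul, integral_div, integral_expAvg fun j hj => hl1int j
          (Icc_subset_Icc_right (mem_Icc.1 hk).2 hj)]
        gcongr
        exact expAvg_le hβ₁.1 hβ₁.2.le hG₁ fun j hj => hgG₁ j
          (Icc_subset_Icc_right (mem_Icc.1 hk).2 hj)

end expectation

theorem stmt0_general {ι : Type*} [Fintype ι] {β₁ β₂ : ℝ} (hβ₁ : β₁ ∈ Set.Ico 0 1)
    (hβ₂ : β₂ ∈ Set.Ico 0 1) {Ω : Type*} [mΩ : MeasurableSpace Ω] (P : Measure Ω)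
    [IsProbabilityMeasure P] {ℋ : ℕ → MeasurableSpace Ω} (hℋ : ∀ k, ℋ k ≤ mΩ)
    {g m v vhat x : ℕ → Ω → ι → ℝ} {K : ℕ} (hK : 1 ≤ K)
    (hgmeas : ∀ k ∈ Icc 1 K, Measurable (g k)) (hxmeas : ∀ k ∈ Icc 1 K, Measurable[ℋ k] (x k))
    (hm0 : ∀ ω i, m 0 ω i = 0) (hv0 : ∀ ω i, v 0 ω i = 0) (hvhat0 : ∀ ω i, vhat 0 ω i = 0)
    (hm : ∀ k ω i, m (k + 1) ω i = β₁ * m k ω i + (1 - β₁) * g (k + 1) ω i)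
    (hv : ∀ k ω i, v (k + 1) ω i = β₂ * v k ω i + (1 - β₂) * g (k + 1) ω i ^ 2)
    (hvhat : ∀ k ω i, vhat (k + 1) ω i = max (vhat k ω i) (v (k + 1) ω i))
    {y : ι → ℝ} {D G G₁ : ℝ} (hxD : ∀ k ∈ Icc 1 K, ∀ᵐ ω ∂P, ‖x k ω - y‖ ≤ D)
    (hgG : ∀ k ∈ Icc 1 K, ∀ᵐ ω ∂P, ‖g k ω‖ ≤ G)
    (hgG₁ : ∀ k ∈ Icc 1 K, ∫ ω, ∑ i, |g k ω i| ∂P ≤ G₁)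
    {F : (ι → ℝ) → ℝ} (hF : ConvexOn ℝ Set.univ F)
    {α : ℕ → ℝ} (hα : ∀ k ∈ Icc 1 K, 0 < α k)
    (hopt : ∀ k ∈ Icc 1 K, ∀ᵐ ω ∂P, ∑ i, (x (k + 1) ω i - y i) *
      (√(vhat k ω i) * (x (k + 1) ω i - x k ω i) + α k * m k ω i) ≤ 0)
    (hsub : ∀ k ∈ Icc 1 K, ∀ᵐ ω ∂P,
      F (x k ω) + ∑ i, (P[fun ω' => g k ω' i | ℋ k]) ω * (y i - x k ω i) ≤ F y) :
    ∫ ω, F (fun i => (∑ k ∈ Icc 1 K, tailWeight β₁ α K k * x k ω i)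
        / ∑ k ∈ Icc 1 K, tailWeight β₁ α K k) ∂P - F y
      ≤ (Fintype.card ι * D ^ 2 * G
          + (∑ k ∈ Icc 1 K, tailWeight β₁ α K k ^ 2) * (G₁ / √(1 - β₂)))
        / (2 * (1 - β₁) * ∑ k ∈ Icc 1 K, tailWeight β₁ α K k) := by
  have h1 : 1 ∈ Icc 1 K := mem_Icc.2 ⟨le_rfl, hK⟩
  have hG : 0 ≤ G := let ⟨ω, h⟩ := (hgG 1 h1).exists; (norm_nonneg _).trans h
  have hG₁ : 0 ≤ G₁ :=
    (integral_nonneg fun ω => sum_nonneg fun i _ => abs_nonneg (g 1 ω i)).trans (hgG₁ 1 h1)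
  have hm_eq : ∀ k ω i, m k ω i = expAvg β₁ (fun j => g j ω i) k := fun k ω i =>
    congrFun (eq_expAvg (a := fun j => m j ω i) (u := fun j => g j ω i) (hm0 ω i)
      fun j => hm j ω i) k
  have hscale_eq : ∀ k ω i, √(vhat k ω i) = amsgradScale β₂ (fun j => g j ω i) k := fun k ω i =>
    sqrt_eq_amsgradScale (v := fun j => v j ω i) (vhat := fun j => vhat j ω i) (hv0 ω i)
      (hvhat0 ω i) (fun j => hv j ω i) (fun j => hvhat j ω i) k
  simp only [hm_eq, hscale_eq] at hopt
  have hw : ∀ k ∈ Icc 1 K, 0 < tailWeight β₁ α K k := fun k hk =>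
    tailWeight_pos hβ₁.1 (fun j hj => hα j (Icc_subset_Icc_left (mem_Icc.1 hk).1 hj))
      (mem_Icc.1 hk).2
  have hw_pos := sum_pos hw ⟨1, h1⟩
  have hx_meas : ∀ k ∈ Icc 1 K, AEStronglyMeasurable (x k) P := fun k hk =>
    ((hxmeas k hk).mono (hℋ k) le_rfl).aestronglyMeasurable
  have hx_mem : ∀ k ∈ Icc 1 K, ∀ᵐ ω ∂P, x k ω ∈ Metric.closedBall y D := fun k hk =>
    (hxD k hk).mono fun _ => mem_closedBall_iff_norm.2
  have hg_int : ∀ k ∈ Icc 1 K, ∀ i, Integrable (fun ω => g k ω i) P := fun k hk i =>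
    .of_bound ((measurable_pi_apply i).comp (hgmeas k hk)).aestronglyMeasurable G
      ((hgG k hk).mono fun ω h => (norm_le_pi_norm (g k ω) i).trans h)
  have hF_cont : Continuous F := continuousOn_univ.1 (hF.continuousOn isOpen_univ)
  have hgap : ∀ k ∈ Icc 1 K, ∫ ω, F (x k ω) ∂P - F y ≤ ∫ ω, ∑ i, (x k ω i - y i) * g k ω i ∂P :=
    fun k hk => integral_sub_le_of_condExp_subgradient (hℋ k) (hxmeas k hk) (hxD k hk)
      (hg_int k hk) (integrable_comp_of_mem_isCompact (isCompact_closedBall y D) hF_cont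
        (hx_meas k hk) (hx_mem k hk)) (hsub k hk)
  have hjensen := integral_comp_centerMass_sub_le (isCompact_closedBall y D)
    (convex_closedBall y D) hF (fun k hk => (hw k hk).le) hw_pos hx_meas hx_mem hgap
  have hregret := weighted_integral_regret_le hβ₁ hβ₂ hG hG₁ hg_int hx_meas hgG hgG₁ hxD hopt
  simp only [centerMass_pi] at hjensen
  refine hjensen.trans ?_
  rw [← div_div, ← div_div]
  exact div_le_div_of_nonneg_right ((le_div_iff₀' (sub_pos.2 hβ₁.2)).2 hregret) hw_pos.le

/-- convex case without delay, constant step size: with `α_k = α/√K`,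
`w_k = ∑_{j=k}^K α_j β₁^{j−k}` and `x̄^(K) = (∑_k w_k x^(k))/(∑_k w_k)`,
`E[F(x̄^(K))] − F* ≤ (n D∞² G∞ + (α²/(1−β₁)²) G₁/√(1−β₂)) / (2α√K(1−β₁))`. -/
theorem stmt0
    {n : ℕ} (hn : 1 ≤ n)
    (β₁ β₂ : ℝ) (hβ₁ : β₁ ∈ Set.Ico (0:ℝ) 1) (hβ₂ : β₂ ∈ Set.Ico (0:ℝ) 1)
    {Ω : Type*} [mΩ : MeasurableSpace Ω] (P : Measure Ω) [IsProbabilityMeasure P]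
    (ℱ : Filtration ℕ mΩ)
    (g m v vhat x : ℕ → Ω → (Fin n → ℝ))
    (hgmeas : ∀ k, Measurable (g k))
    (hxmeas : ∀ k, Measurable[ℱ k] (x k))
    (hm0 : ∀ ω i, m 0 ω i = 0) (hv0 : ∀ ω i, v 0 ω i = 0) (hvhat0 : ∀ ω i, vhat 0 ω i = 0)
    (hm : ∀ k ω i, m (k+1) ω i = β₁ * m k ω i + (1 - β₁) * g (k+1) ω i)
    (hv : ∀ k ω i, v (k+1) ω i = β₂ * v k ω i + (1 - β₂) * (g (k+1) ω i)^2)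
    (hvhat : ∀ k ω i, vhat (k+1) ω i = max (vhat k ω i) (v (k+1) ω i))
    (X : Set (Fin n → ℝ)) (hXne : X.Nonempty) (hXcpt : IsCompact X) (hXcvx : Convex ℝ X)
    (Dinf Ginf G₁ : ℝ)
    (hD : ∀ p ∈ X, ∀ q ∈ X, ∀ i, |p i - q i| ≤ Dinf)
    (hGinf : ∀ k, 1 ≤ k → ∀ᵐ ω ∂P, ∀ i, |g k ω i| ≤ Ginf)
    (hG1 : ∀ k, 1 ≤ k → ∫ ω, (∑ i, |g k ω i|) ∂P ≤ G₁)
    (F : (Fin n → ℝ) → ℝ) (hF : ConvexOn ℝ Set.univ F)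
    (Fstar : ℝ) (hFstar : IsLeast (F '' X) Fstar)
    (K : ℕ) (hK : 1 ≤ K) (α : ℝ) (hα : 0 < α)
    (αseq : ℕ → ℝ) (hαseq : ∀ k, 1 ≤ k → αseq k = α / Real.sqrt K)
    (hxX : ∀ᵐ ω ∂P, ∀ k, 1 ≤ k → x k ω ∈ X)
    (hopt : ∀ᵐ ω ∂P, ∀ k, 1 ≤ k → ∀ y ∈ X,
      (∑ i, (x (k+1) ω i - y i) *
        (Real.sqrt (vhat k ω i) * (x (k+1) ω i - x k ω i) + αseq k * m k ω i)) ≤ 0)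
    (hsub : ∀ k, 1 ≤ k → ∀ᵐ ω ∂P, ∀ y ∈ X,
      F y ≥ F (x k ω) + ∑ i, (P[(fun ω' => g k ω' i)|ℱ k]) ω * (y i - x k ω i)) :
    (∫ ω, F (fun i =>
        (∑ k ∈ Finset.Icc 1 K,
            (∑ j ∈ Finset.Icc k K, αseq j * β₁ ^ (j - k)) * x k ω i) /
        (∑ k ∈ Finset.Icc 1 K, ∑ j ∈ Finset.Icc k K, αseq j * β₁ ^ (j - k))) ∂P) - Fstar
      ≤ (n * Dinf^2 * Ginf + (α^2 / (1 - β₁)^2) * (G₁ / Real.sqrt (1 - β₂)))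
          / (2 * α * Real.sqrt K * (1 - β₁)) := by
  obtain ⟨⟨y, hyX, rfl⟩, -⟩ := hFstar
  have : Nonempty (Fin n) := ⟨⟨0, hn⟩⟩
  have hgG : ∀ k ∈ Icc 1 K, ∀ᵐ ω ∂P, ‖g k ω‖ ≤ Ginf := fun k hk =>
    (hGinf k (mem_Icc.1 hk).1).mono fun ω h => (pi_norm_le_iff_of_nonempty _).2 h
  have hgG₁ : ∀ k ∈ Icc 1 K, ∫ ω, ∑ i, |g k ω i| ∂P ≤ G₁ := fun k hk => hG1 k (mem_Icc.1 hk).1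
  have hxD : ∀ k ∈ Icc 1 K, ∀ᵐ ω ∂P, ‖x k ω - y‖ ≤ Dinf := fun k hk =>
    hxX.mono fun ω h => (pi_norm_le_iff_of_nonempty _).2 (hD _ (h k (mem_Icc.1 hk).1) y hyX)
  have hstep : ∀ k ∈ Icc 1 K, αseq k = α / √K := fun k hk => hαseq k (mem_Icc.1 hk).1
  have hstep_pos : ∀ k ∈ Icc 1 K, 0 < αseq k := fun k hk => by rw [hstep k hk]; positivity
  have h1 : 1 ∈ Icc 1 K := mem_Icc.2 ⟨le_rfl, hK⟩
  have hG_nonneg : 0 ≤ Ginf := let ⟨ω, h⟩ := (hgG 1 h1).exists; (norm_nonneg _).trans h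
  have hG₁_nonneg : 0 ≤ G₁ :=
    (integral_nonneg fun ω => sum_nonneg fun i _ => abs_nonneg (g 1 ω i)).trans (hgG₁ 1 h1)
  have hgeneral := stmt0_general hβ₁ hβ₂ P ℱ.le hK (fun k _ => hgmeas k) (fun k _ => hxmeas k)
    hm0 hv0 hvhat0 hm hv hvhat hxD hgG hgG₁ hF hstep_pos
    (fun k hk => hopt.mono fun ω h => h k (mem_Icc.1 hk).1 y hyX)
    (fun k hk => (hsub k (mem_Icc.1 hk).1).mono fun ω h => h y hyX)
  rw [Fintype.card_fin] at hgeneral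
  exact hgeneral.trans <| div_sum_tailWeight_le hβ₁ hK hα hstep (by positivity) (by positivity)
end

section
/- Assume β₂ < 1 and E‖g^(j)‖₁ ≤ G₁ for all j ≥ 1. Then for every k ≥ 1, E[ ∑_{i=1}^{n} (m_i^(k))² / √(v̂_i^(k)) ] ≤ G₁ / √(1−β₂), where terms with v̂_i^(k) = 0 are interpreted as 0. -/
open MeasureTheory Finset

/-!
Coordinatewise, `m` is the exponential moving average of the `g j` and `v̂ k` is the largest moving
average of the squares `g j ^ 2` so far. The last observation has weight `1 - β₂`, so
`(1 - β₂) * g j ^ 2 ≤ v̂ k` for every `j ≤ k`, that is `g j ^ 2 ≤ |g j| * √(v̂ k) / √(1 - β₂)`.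
Averaging this over `j` and using Jensen's inequality for the square bounds `m k ^ 2 / √(v̂ k)` by
the moving average of the `|g j|`, divided by `√(1 - β₂)`. That average is linear in the `|g j|`, so
summing over coordinates and taking expectations leaves a moving average of the numbers `E ‖g j‖₁`.
-/

section ExponentialMovingAverage

variable {E : Type*} [AddCommGroup E] [Module ℝ E] {β : ℝ}

/-- The exponential moving average of `x 1, x 2, …` with decay rate `β`, started at `0`. The value
`x 0` does not enter, so that `ema β x k` is the average after `k` observations. -/
def ema (β : ℝ) (x : ℕ → E) : ℕ → E
  | 0 => 0
  | k + 1 => β • ema β x k + (1 - β) • x (k + 1)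

@[simp]
theorem ema_zero (β : ℝ) (x : ℕ → E) : ema β x 0 = 0 := rfl

theorem ema_succ (β : ℝ) (x : ℕ → E) (k : ℕ) :
    ema β x (k + 1) = β • ema β x k + (1 - β) • x (k + 1) := rfl

theorem eq_ema_of_recurrence {x y : ℕ → E} (h₀ : y 0 = 0)
    (h : ∀ k, y (k + 1) = β • y k + (1 - β) • x (k + 1)) : y = ema β x := by
  funext k
  induction k with
  | zero => exact h₀
  | succ k ih => rw [h, ih, ema_succ]

theorem ema_const_smul (c : ℝ) (x : ℕ → E) (k : ℕ) :
    ema β (fun j => c • x j) k = c • ema β x k := by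
  induction k with
  | zero => simp
  | succ k ih => simp only [ema_succ, ih, smul_add, smul_comm c]

theorem sum_ema {ι : Type*} (s : Finset ι) (x : ι → ℕ → E) (k : ℕ) :
    ∑ i ∈ s, ema β (x i) k = ema β (fun j => ∑ i ∈ s, x i j) k := by
  induction k with
  | zero => simp
  | succ k ih => simp only [ema_succ, ← ih, sum_add_distrib, smul_sum]

theorem ema_mem_of_convex (hβ : β ∈ Set.Icc 0 1) {s : Set E} (hs : Convex ℝ s) (h₀ : 0 ∈ s)
    {x : ℕ → E} (hx : ∀ j, 1 ≤ j → x j ∈ s) (k : ℕ) : ema β x k ∈ s := by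
  induction k with
  | zero => exact h₀
  | succ k ih =>
    exact hs ih (hx _ (Nat.le_add_left 1 k)) hβ.1 (sub_nonneg.2 hβ.2) (add_sub_cancel _ _)

-- The weights of `ema β x k` sum to `1 - β ^ k ≤ 1`; the missing mass sits at `0`.
theorem map_ema_le_of_convexOn (hβ : β ∈ Set.Icc 0 1) {f : E → ℝ} (hf : ConvexOn ℝ Set.univ f)
    (hf₀ : f 0 ≤ 0) (x : ℕ → E) (k : ℕ) : f (ema β x k) ≤ ema β (fun j => f (x j)) k := by
  induction k with
  | zero => exact hf₀
  | succ k ih =>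
    calc f (ema β x (k + 1))
        ≤ β • f (ema β x k) + (1 - β) • f (x (k + 1)) :=
          hf.2 trivial trivial hβ.1 (sub_nonneg.2 hβ.2) (add_sub_cancel _ _)
      _ ≤ ema β (fun j => f (x j)) (k + 1) :=
          add_le_add_left (smul_le_smul_of_nonneg_left ih hβ.1) _

theorem sq_ema_le_ema_sq (hβ : β ∈ Set.Icc 0 1) (x : ℕ → ℝ) (k : ℕ) :
    ema β x k ^ 2 ≤ ema β (fun j => x j ^ 2) k :=
  map_ema_le_of_convexOn hβ even_two.convexOn_pow (zero_pow two_ne_zero).le x k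

section Order

variable [PartialOrder E] [IsOrderedAddMonoid E] [PosSMulMono ℝ E]

theorem ema_le_ema (hβ : β ∈ Set.Icc 0 1) {x y : ℕ → E} {k : ℕ}
    (h : ∀ j, 1 ≤ j → j ≤ k → x j ≤ y j) : ema β x k ≤ ema β y k := by
  induction k with
  | zero => exact le_rfl
  | succ k ih =>
    exact add_le_add
      (smul_le_smul_of_nonneg_left (ih fun j hj hjk => h j hj (Nat.le_succ_of_le hjk)) hβ.1)
      (smul_le_smul_of_nonneg_left (h _ (Nat.le_add_left 1 k) le_rfl) (sub_nonneg.2 hβ.2))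

theorem ema_le (hβ : β ∈ Set.Icc 0 1) {x : ℕ → E} {c : E} (hc : 0 ≤ c)
    (hx : ∀ j, 1 ≤ j → x j ≤ c) (k : ℕ) : ema β x k ≤ c :=
  ema_mem_of_convex hβ (convex_Iic c) hc hx k

theorem ema_nonneg (hβ : β ∈ Set.Icc 0 1) {x : ℕ → E} (hx : ∀ j, 1 ≤ j → 0 ≤ x j) (k : ℕ) :
    0 ≤ ema β x k :=
  ema_mem_of_convex hβ (convex_Ici 0) Set.self_mem_Ici hx k

theorem smul_le_ema (hβ : β ∈ Set.Icc 0 1) {x : ℕ → E} (hx : ∀ j, 1 ≤ j → 0 ≤ x j) {k : ℕ}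
    (hk : 1 ≤ k) : (1 - β) • x k ≤ ema β x k := by
  obtain ⟨k, rfl⟩ := Nat.exists_eq_add_of_le' hk
  exact le_add_of_nonneg_left (smul_nonneg hβ.1 (ema_nonneg hβ hx k))

end Order

end ExponentialMovingAverage

section RandomAverage

variable {Ω E : Type*} [MeasurableSpace Ω] {μ : Measure Ω} [NormedAddCommGroup E]
  [NormedSpace ℝ E] {β : ℝ} {X : ℕ → Ω → E}

theorem aestronglyMeasurable_ema (hX : ∀ j, AEStronglyMeasurable (X j) μ) (k : ℕ) :
    AEStronglyMeasurable (fun ω => ema β (fun j => X j ω) k) μ := by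
  induction k with
  | zero => exact aestronglyMeasurable_const
  | succ k ih => exact (ih.const_smul β).add ((hX (k + 1)).const_smul (1 - β))

theorem integrable_ema (hX : ∀ j, Integrable (X j) μ) (k : ℕ) :
    Integrable (fun ω => ema β (fun j => X j ω) k) μ := by
  induction k with
  | zero => exact integrable_zero Ω E μ
  | succ k ih => exact (ih.smul β).add ((hX (k + 1)).smul (1 - β))

theorem integral_ema (hX : ∀ j, Integrable (X j) μ) (k : ℕ) :
    ∫ ω, ema β (fun j => X j ω) k ∂μ = ema β (fun j => ∫ ω, X j ω ∂μ) k := by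
  induction k with
  | zero => exact integral_zero Ω E
  | succ k ih =>
    calc ∫ ω, ema β (fun j => X j ω) (k + 1) ∂μ
        = ∫ ω, β • ema β (fun j => X j ω) k ∂μ + ∫ ω, (1 - β) • X (k + 1) ω ∂μ :=
          integral_add ((integrable_ema hX k).smul β) ((hX (k + 1)).smul (1 - β))
      _ = ema β (fun j => ∫ ω, X j ω ∂μ) (k + 1) := by
          rw [integral_smul, integral_smul, ih, ema_succ]

end RandomAverage

theorem integrable_apply_of_ae_abs_le {Ω ι : Type*} [MeasurableSpace Ω] {μ : Measure Ω}
    [IsFiniteMeasure μ] {f : Ω → ι → ℝ} (hf : AEMeasurable f μ) {C : ℝ}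
    (hC : ∀ᵐ ω ∂μ, ∀ i, |f ω i| ≤ C) (i : ι) : Integrable (fun ω => f ω i) μ :=
  .of_bound ((measurable_pi_apply i).comp_aemeasurable hf).aestronglyMeasurable C
    (hC.mono fun _ h => h i)

section RunningMaximum

theorem eq_partialSups_of_recurrence {α : Type*} [SemilatticeSup α] {f F : ℕ → α}
    (h₀ : F 0 = f 0) (h : ∀ k, F (k + 1) = F k ⊔ f (k + 1)) : F = partialSups f := by
  funext k
  induction k with
  | zero => rw [h₀, partialSups_zero]
  | succ k ih => rw [h, ih, partialSups_add_one]

theorem aestronglyMeasurable_partialSups {Ω α : Type*} [MeasurableSpace Ω] {μ : Measure Ω}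
    [TopologicalSpace α] [SemilatticeSup α] [ContinuousSup α] {X : ℕ → Ω → α}
    (hX : ∀ j, AEStronglyMeasurable (X j) μ) (k : ℕ) :
    AEStronglyMeasurable (fun ω => partialSups (fun j => X j ω) k) μ := by
  induction k with
  | zero => simpa only [partialSups_zero] using hX 0
  | succ k ih =>
    simp only [partialSups_add_one]
    exact ih.sup (hX (k + 1))

end RunningMaximum

section AMSGrad

variable {β₁ β₂ : ℝ}

/-- The second moment estimate `v̂` that AMSGrad forms from a scalar gradient sequence `g` with
decay rate `β`: the running maximum of the exponential moving averages of `g ^ 2`. -/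
noncomputable def maxSecondMoment (β : ℝ) (g : ℕ → ℝ) : ℕ → ℝ :=
  partialSups (ema β fun j => g j ^ 2)

theorem mul_sq_le_maxSecondMoment (hβ₂ : β₂ ∈ Set.Icc 0 1) (g : ℕ → ℝ) {j k : ℕ} (hj : 1 ≤ j)
    (hjk : j ≤ k) : (1 - β₂) * g j ^ 2 ≤ maxSecondMoment β₂ g k :=
  (smul_le_ema hβ₂ (x := fun j => g j ^ 2) (fun _ _ => sq_nonneg _) hj).trans
    (le_partialSups_of_le (ema β₂ fun j => g j ^ 2) hjk)

theorem abs_le_sqrt_maxSecondMoment_div (hβ₂ : β₂ ∈ Set.Ico 0 1) (g : ℕ → ℝ) {j k : ℕ}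
    (hj : 1 ≤ j) (hjk : j ≤ k) : |g j| ≤ √(maxSecondMoment β₂ g k) / √(1 - β₂) := by
  have hpos : 0 < 1 - β₂ := sub_pos.2 hβ₂.2
  rw [← Real.sqrt_div' _ hpos.le]
  refine Real.abs_le_sqrt ((le_div_iff₀' hpos).2 ?_)
  exact mul_sq_le_maxSecondMoment (Set.Ico_subset_Icc_self hβ₂) g hj hjk

theorem sq_ema_div_sqrt_maxSecondMoment_le (hβ₁ : β₁ ∈ Set.Icc 0 1) (hβ₂ : β₂ ∈ Set.Ico 0 1)
    (g : ℕ → ℝ) (k : ℕ) :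
    ema β₁ g k ^ 2 / √(maxSecondMoment β₂ g k) ≤ ema β₁ (fun j => |g j|) k / √(1 - β₂) := by
  set r := √(maxSecondMoment β₂ g k)
  have habs : 0 ≤ ema β₁ (fun j => |g j|) k := ema_nonneg hβ₁ (fun _ _ => abs_nonneg _) k
  -- This form of the division inequality also covers `r = 0`, where the quotient is `0`.
  refine div_le_of_le_mul₀ (Real.sqrt_nonneg _) (by positivity) ?_
  calc ema β₁ g k ^ 2
      ≤ ema β₁ (fun j => g j ^ 2) k := sq_ema_le_ema_sq hβ₁ g k
    _ ≤ ema β₁ (fun j => (r / √(1 - β₂)) • |g j|) k := by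
        refine ema_le_ema hβ₁ fun j hj hjk => ?_
        rw [← sq_abs, sq, smul_eq_mul]
        gcongr
        exact abs_le_sqrt_maxSecondMoment_div hβ₂ g hj hjk
    _ = ema β₁ (fun j => |g j|) k / √(1 - β₂) * r := by
        rw [ema_const_smul, smul_eq_mul]
        ring

variable {Ω ι : Type*} [MeasurableSpace Ω] {μ : Measure Ω} [Fintype ι]

theorem aestronglyMeasurable_maxSecondMoment {X : ℕ → Ω → ℝ}
    (hX : ∀ j, AEStronglyMeasurable (X j) μ) (k : ℕ) :
    AEStronglyMeasurable (fun ω => maxSecondMoment β₂ (fun j => X j ω) k) μ :=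
  aestronglyMeasurable_partialSups (aestronglyMeasurable_ema fun j => (hX j).pow 2) k

theorem integrable_sq_ema_div_sqrt_maxSecondMoment (hβ₁ : β₁ ∈ Set.Icc 0 1)
    (hβ₂ : β₂ ∈ Set.Ico 0 1) {X : ℕ → Ω → ℝ} (hX : ∀ j, Integrable (X j) μ) (k : ℕ) :
    Integrable
      (fun ω => ema β₁ (fun j => X j ω) k ^ 2 / √(maxSecondMoment β₂ (fun j => X j ω) k)) μ := by
  have hmeas j : AEStronglyMeasurable (X j) μ := (hX j).aestronglyMeasurable
  refine ((integrable_ema (β := β₁) (fun j => (hX j).abs) k).div_const √(1 - β₂)).mono'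
    (((aestronglyMeasurable_ema hmeas k).pow 2).div₀ ?_) (.of_forall fun ω => ?_)
  · exact Real.continuous_sqrt.comp_aestronglyMeasurable
      (aestronglyMeasurable_maxSecondMoment hmeas k)
  · rw [Real.norm_of_nonneg (by positivity)]
    exact sq_ema_div_sqrt_maxSecondMoment_le hβ₁ hβ₂ (fun j => X j ω) k

theorem integral_sum_sq_ema_div_sqrt_maxSecondMoment_le (hβ₁ : β₁ ∈ Set.Icc 0 1)
    (hβ₂ : β₂ ∈ Set.Ico 0 1) {g : ℕ → Ω → ι → ℝ} (hg : ∀ j i, Integrable (fun ω => g j ω i) μ)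
    {G : ℝ} (hG : ∀ j, 1 ≤ j → ∫ ω, ∑ i, |g j ω i| ∂μ ≤ G) (k : ℕ) :
    ∫ ω, ∑ i, ema β₁ (fun j => g j ω i) k ^ 2 / √(maxSecondMoment β₂ (fun j => g j ω i) k) ∂μ
      ≤ G / √(1 - β₂) := by
  have hnorm j : Integrable (fun ω => ∑ i, |g j ω i|) μ :=
    integrable_finsetSum _ fun i _ => (hg j i).abs
  have hG₀ : 0 ≤ G :=
    (integral_nonneg fun ω => sum_nonneg fun i _ => abs_nonneg (g 1 ω i)).trans (hG 1 le_rfl)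
  calc _ ≤ ∫ ω, ema β₁ (fun j => ∑ i, |g j ω i|) k / √(1 - β₂) ∂μ := by
        refine integral_mono
          (integrable_finsetSum _ fun i _ =>
            integrable_sq_ema_div_sqrt_maxSecondMoment hβ₁ hβ₂ (fun j => hg j i) k)
          ((integrable_ema hnorm k).div_const _) fun ω => ?_
        simp only [← sum_ema, sum_div]
        exact sum_le_sum fun i _ => sq_ema_div_sqrt_maxSecondMoment_le hβ₁ hβ₂ _ k
    _ = ema β₁ (fun j => ∫ ω, ∑ i, |g j ω i| ∂μ) k / √(1 - β₂) := by
        rw [integral_div, integral_ema hnorm]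
    _ ≤ G / √(1 - β₂) := by
        gcongr
        exact ema_le hβ₁ hG₀ hG k

theorem stmt8_general (hβ₁ : β₁ ∈ Set.Icc 0 1) (hβ₂ : β₂ ∈ Set.Ico 0 1)
    {g m v vhat : ℕ → Ω → ι → ℝ} (hg : ∀ j i, Integrable (fun ω => g j ω i) μ)
    (hm0 : ∀ ω i, m 0 ω i = 0) (hv0 : ∀ ω i, v 0 ω i = 0) (hvhat0 : ∀ ω i, vhat 0 ω i = 0)
    (hm : ∀ k ω i, m (k + 1) ω i = β₁ * m k ω i + (1 - β₁) * g (k + 1) ω i)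
    (hv : ∀ k ω i, v (k + 1) ω i = β₂ * v k ω i + (1 - β₂) * g (k + 1) ω i ^ 2)
    (hvhat : ∀ k ω i, vhat (k + 1) ω i = max (vhat k ω i) (v (k + 1) ω i))
    {G : ℝ} (hG : ∀ j, 1 ≤ j → ∫ ω, ∑ i, |g j ω i| ∂μ ≤ G) (k : ℕ) :
    Integrable (fun ω => ∑ i, m k ω i ^ 2 / √(vhat k ω i)) μ ∧
      ∫ ω, ∑ i, m k ω i ^ 2 / √(vhat k ω i) ∂μ ≤ G / √(1 - β₂) := by
  have hm_eq ω i : m k ω i = ema β₁ (fun j => g j ω i) k :=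
    congrFun (eq_ema_of_recurrence (y := fun k => m k ω i) (hm0 ω i) fun k => hm k ω i) k
  have hv_eq ω i : (fun k => v k ω i) = ema β₂ (fun j => g j ω i ^ 2) :=
    eq_ema_of_recurrence (hv0 ω i) fun k => hv k ω i
  have hvhat_eq ω i : vhat k ω i = maxSecondMoment β₂ (fun j => g j ω i) k := by
    rw [maxSecondMoment, ← hv_eq]
    exact congrFun (eq_partialSups_of_recurrence (F := fun k => vhat k ω i)
      ((hvhat0 ω i).trans (hv0 ω i).symm) fun k => hvhat k ω i) k
  simp only [hm_eq, hvhat_eq]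
  exact ⟨integrable_finsetSum _ fun i _ =>
      integrable_sq_ema_div_sqrt_maxSecondMoment hβ₁ hβ₂ (fun j => hg j i) k,
    integral_sum_sq_ema_div_sqrt_maxSecondMoment_le hβ₁ hβ₂ hg hG k⟩

end AMSGrad

/-- If `E‖g^(j)‖₁ ≤ G₁` for all `j ≥ 1`, then for every `k ≥ 1`,
`E[∑_i (m_i^(k))²/√(v̂_i^(k))] ≤ G₁/√(1−β₂)` (terms with `v̂_i^(k) = 0` interpreted as `0`,
matching Lean's division-by-zero convention). -/
theorem stmt8
    {n : ℕ} (hn : 1 ≤ n)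
    (β₁ β₂ : ℝ) (hβ₁ : β₁ ∈ Set.Ico (0:ℝ) 1) (hβ₂ : β₂ ∈ Set.Ico (0:ℝ) 1)
    {Ω : Type*} [mΩ : MeasurableSpace Ω] (P : Measure Ω) [IsProbabilityMeasure P]
    (g m v vhat : ℕ → Ω → (Fin n → ℝ))
    (hgmeas : ∀ k, Measurable (g k))
    (hgbdd : ∀ k, ∃ C : ℝ, ∀ᵐ ω ∂P, ∀ i, |g k ω i| ≤ C)
    (hm0 : ∀ ω i, m 0 ω i = 0) (hv0 : ∀ ω i, v 0 ω i = 0) (hvhat0 : ∀ ω i, vhat 0 ω i = 0)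
    (hm : ∀ k ω i, m (k+1) ω i = β₁ * m k ω i + (1 - β₁) * g (k+1) ω i)
    (hv : ∀ k ω i, v (k+1) ω i = β₂ * v k ω i + (1 - β₂) * (g (k+1) ω i)^2)
    (hvhat : ∀ k ω i, vhat (k+1) ω i = max (vhat k ω i) (v (k+1) ω i))
    (G₁ : ℝ)
    (hG1 : ∀ j, 1 ≤ j → ∫ ω, (∑ i, |g j ω i|) ∂P ≤ G₁)
    (k : ℕ) (hk : 1 ≤ k) :
    ∫ ω, (∑ i, (m k ω i)^2 / Real.sqrt (vhat k ω i)) ∂P ≤ G₁ / Real.sqrt (1 - β₂) := by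
  have hg j := (hgbdd j).elim fun _ hC => integrable_apply_of_ae_abs_le (hgmeas j).aemeasurable hC
  exact (stmt8_general (Set.Ico_subset_Icc_self hβ₁) hβ₂ hg hm0 hv0 hvhat0 hm hv hvhat hG1 k).2
end

section
/- For every k ≥ 1, ∑_{i=1}^{n} (m_i^(k))² / √(v̂_i^(k)) ≤ ((1−β₁)/√(1−β₂)) · ∑_{j=1}^{k} β₁^{k−j} ‖g^(j)‖₁, where terms with v̂_i^(k) = 0 are interpreted as 0 and β₂ < 1. -/
open Finset

/-!
Each coordinate of `m` is an exponential moving average of the gradients. It therefore stays below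
every monotone envelope of their absolute values, and `√(v̂ / (1 - β₂))` is such an envelope,
because `(1 - β₂) g² ≤ v ≤ v̂` and `v̂` is monotone. Trading one factor of `m²` against this
envelope leaves `|m| / √(1 - β₂)`, and `|m|` is estimated by the closed form of the moving average.
-/

/-- `a` is an exponential moving average of `u` with decay rate `β`. The initial value `a 0` is left
free and, as for the AMSGrad moments, `u 0` is never read. -/
def IsExpMovingAvg {R : Type*} [Ring R] (β : R) (u a : ℕ → R) : Prop :=
  ∀ k, a (k + 1) = β * a k + (1 - β) * u (k + 1)

theorem sum_Icc_succ_pow_sub_mul {R : Type*} [Semiring R] (β : R) (u : ℕ → R) (k : ℕ) :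
    ∑ j ∈ Icc 1 (k + 1), β ^ (k + 1 - j) * u j
      = β * ∑ j ∈ Icc 1 k, β ^ (k - j) * u j + u (k + 1) := by
  rw [sum_Icc_succ_top (by lia), mul_sum, Nat.sub_self, pow_zero, one_mul]
  congr 1
  refine sum_congr rfl fun j hj => ?_
  rw [Nat.succ_sub (mem_Icc.mp hj).2, pow_succ', mul_assoc]

theorem sq_div_le_mul_abs {K : Type*} [Field K] [LinearOrder K] [IsStrictOrderedRing K]
    {x r c : K} (hr : 0 ≤ r) (hc : 0 ≤ c) (hx : |x| ≤ c * r) : x ^ 2 / r ≤ c * |x| := by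
  refine div_le_of_le_mul₀ hr (mul_nonneg hc (abs_nonneg x)) ?_
  calc x ^ 2 = |x| * |x| := by rw [abs_mul_abs_self, sq]
    _ ≤ c * r * |x| := by gcongr
    _ = c * |x| * r := by ring

namespace IsExpMovingAvg

theorem eq_sum {R : Type*} [CommRing R] {β : R} {u a : ℕ → R} (h : IsExpMovingAvg β u a) (k : ℕ) :
    a k = β ^ k * a 0 + (1 - β) * ∑ j ∈ Icc 1 k, β ^ (k - j) * u j := by
  induction k with
  | zero => simp
  | succ k ih =>
    rw [h k, ih, sum_Icc_succ_pow_sub_mul]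
    ring

section Ordered

variable {R : Type*} [CommRing R] [LinearOrder R] [IsStrictOrderedRing R] {β : R} {u a : ℕ → R}

theorem nonneg (h : IsExpMovingAvg β u a) (hβ_nonneg : 0 ≤ β) (hβ_le : β ≤ 1) (ha : 0 ≤ a 0)
    (hu : ∀ k, 0 ≤ u (k + 1)) (k : ℕ) : 0 ≤ a k := by
  induction k with
  | zero => exact ha
  | succ k ih =>
    rw [h k]
    exact add_nonneg (mul_nonneg hβ_nonneg ih) (mul_nonneg (sub_nonneg.mpr hβ_le) (hu k))

theorem one_sub_mul_le (h : IsExpMovingAvg β u a) (hβ : 0 ≤ β) {k : ℕ} (ha : 0 ≤ a k) :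
    (1 - β) * u (k + 1) ≤ a (k + 1) := by
  rw [h k]
  exact le_add_of_nonneg_left (mul_nonneg hβ ha)

theorem abs_le_of_monotone (h : IsExpMovingAvg β u a) (hβ_nonneg : 0 ≤ β) (hβ_le : β ≤ 1)
    {b : ℕ → R} (hb : Monotone b) (ha : |a 0| ≤ b 0) (hu : ∀ k, |u (k + 1)| ≤ b (k + 1)) (k : ℕ) :
    |a k| ≤ b k := by
  have hβ' : 0 ≤ 1 - β := sub_nonneg.mpr hβ_le
  induction k with
  | zero => exact ha
  | succ k ih =>
    calc |a (k + 1)| ≤ |β * a k| + |(1 - β) * u (k + 1)| := by rw [h k]; exact abs_add_le _ _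
      _ = β * |a k| + (1 - β) * |u (k + 1)| := by
        rw [abs_mul, abs_mul, abs_of_nonneg hβ_nonneg, abs_of_nonneg hβ']
      _ ≤ β * b (k + 1) + (1 - β) * b (k + 1) := by
        gcongr
        · exact ih.trans (hb k.le_succ)
        · exact hu k
      _ = b (k + 1) := by ring

theorem abs_le_sum (h : IsExpMovingAvg β u a) (hβ_nonneg : 0 ≤ β) (hβ_le : β ≤ 1) (k : ℕ) :
    |a k| ≤ β ^ k * |a 0| + (1 - β) * ∑ j ∈ Icc 1 k, β ^ (k - j) * |u j| := by
  have hβ' : 0 ≤ 1 - β := sub_nonneg.mpr hβ_le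
  have abs_pow_mul (l : ℕ) (x : R) : |β ^ l * x| = β ^ l * |x| := by
    rw [abs_mul, abs_of_nonneg (pow_nonneg hβ_nonneg l)]
  calc |a k| ≤ |β ^ k * a 0| + |(1 - β) * ∑ j ∈ Icc 1 k, β ^ (k - j) * u j| := by
        rw [h.eq_sum k]
        exact abs_add_le _ _
    _ ≤ β ^ k * |a 0| + (1 - β) * ∑ j ∈ Icc 1 k, |β ^ (k - j) * u j| := by
        rw [abs_pow_mul, abs_mul, abs_of_nonneg hβ']
        gcongr
        exact abs_sum_le_sum_abs _ _
    _ = β ^ k * |a 0| + (1 - β) * ∑ j ∈ Icc 1 k, β ^ (k - j) * |u j| := by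
        simp only [abs_pow_mul]

end Ordered

section Real

variable {β c : ℝ} {u a w : ℕ → ℝ}

theorem abs_le_inv_sqrt_mul_sqrt (h : IsExpMovingAvg β u a) (hβ_nonneg : 0 ≤ β) (hβ_le : β ≤ 1)
    (ha : a 0 = 0) (hc : 0 < c) (hw : Monotone w) (huw : ∀ k, c * u (k + 1) ^ 2 ≤ w (k + 1))
    (k : ℕ) : |a k| ≤ (√c)⁻¹ * √(w k) := by
  refine h.abs_le_of_monotone hβ_nonneg hβ_le (b := fun k => (√c)⁻¹ * √(w k)) ?_ ?_ (fun k => ?_) k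
  · intro k l hkl
    have := hw hkl
    dsimp only
    gcongr
  · rw [ha, abs_zero]
    positivity
  · rw [le_inv_mul_iff₀ (Real.sqrt_pos.mpr hc), ← Real.sqrt_sq_eq_abs, ← Real.sqrt_mul hc.le]
    exact Real.sqrt_le_sqrt (huw k)

theorem sq_div_sqrt_le (h : IsExpMovingAvg β u a) (hβ_nonneg : 0 ≤ β) (hβ_le : β ≤ 1)
    (ha : a 0 = 0) (hc : 0 < c) (hw : Monotone w) (huw : ∀ k, c * u (k + 1) ^ 2 ≤ w (k + 1))
    (k : ℕ) :
    a k ^ 2 / √(w k) ≤ (1 - β) / √c * ∑ j ∈ Icc 1 k, β ^ (k - j) * |u j| := by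
  have habs : |a k| ≤ (1 - β) * ∑ j ∈ Icc 1 k, β ^ (k - j) * |u j| := by
    simpa only [ha, abs_zero, mul_zero, zero_add] using h.abs_le_sum hβ_nonneg hβ_le k
  calc a k ^ 2 / √(w k) ≤ (√c)⁻¹ * |a k| :=
        sq_div_le_mul_abs (by positivity) (by positivity)
          (h.abs_le_inv_sqrt_mul_sqrt hβ_nonneg hβ_le ha hc hw huw k)
    _ ≤ (√c)⁻¹ * ((1 - β) * ∑ j ∈ Icc 1 k, β ^ (k - j) * |u j|) := by gcongr
    _ = (1 - β) / √c * ∑ j ∈ Icc 1 k, β ^ (k - j) * |u j| := by ring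

end Real

end IsExpMovingAvg

theorem stmt9_general {ι : Type*} (s : Finset ι) {β₁ β₂ : ℝ} (hβ₁ : β₁ ∈ Set.Icc (0 : ℝ) 1)
    (hβ₂ : β₂ ∈ Set.Ico (0 : ℝ) 1) {g m v vhat : ℕ → ι → ℝ}
    (hm0 : ∀ i ∈ s, m 0 i = 0) (hv0 : ∀ i ∈ s, 0 ≤ v 0 i)
    (hm : ∀ i ∈ s, IsExpMovingAvg β₁ (g · i) (m · i))
    (hv : ∀ i ∈ s, IsExpMovingAvg β₂ (g · i ^ 2) (v · i))
    (hvhat : ∀ i ∈ s, Monotone (vhat · i)) (hle : ∀ i ∈ s, ∀ k, v (k + 1) i ≤ vhat (k + 1) i)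
    (k : ℕ) :
    ∑ i ∈ s, m k i ^ 2 / √(vhat k i)
      ≤ (1 - β₁) / √(1 - β₂) * ∑ j ∈ Icc 1 k, β₁ ^ (k - j) * ∑ i ∈ s, |g j i| := by
  have hgrad (i) (hi : i ∈ s) (k : ℕ) : (1 - β₂) * g (k + 1) i ^ 2 ≤ vhat (k + 1) i :=
    have hv_nonneg : 0 ≤ v k i :=
      (hv i hi).nonneg hβ₂.1 hβ₂.2.le (hv0 i hi) (fun _ => sq_nonneg _) k
    ((hv i hi).one_sub_mul_le hβ₂.1 hv_nonneg).trans (hle i hi k)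
  calc ∑ i ∈ s, m k i ^ 2 / √(vhat k i)
      ≤ ∑ i ∈ s, (1 - β₁) / √(1 - β₂) * ∑ j ∈ Icc 1 k, β₁ ^ (k - j) * |g j i| :=
        sum_le_sum fun i hi => (hm i hi).sq_div_sqrt_le hβ₁.1 hβ₁.2 (hm0 i hi)
          (sub_pos.mpr hβ₂.2) (hvhat i hi) (hgrad i hi) k
    _ = (1 - β₁) / √(1 - β₂) * ∑ j ∈ Icc 1 k, β₁ ^ (k - j) * ∑ i ∈ s, |g j i| := by
        rw [← mul_sum, sum_comm]
        simp only [mul_sum]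

/-- For every `k ≥ 1`,
`∑_i (m_i^(k))²/√(v̂_i^(k)) ≤ ((1−β₁)/√(1−β₂)) ∑_{j=1}^{k} β₁^{k−j} ‖g^(j)‖₁`
(terms with `v̂_i^(k) = 0` are interpreted as `0`, which matches Lean's `x / 0 = 0`). -/
theorem stmt9
    {n : ℕ} (hn : 1 ≤ n)
    (β₁ β₂ : ℝ) (hβ₁ : β₁ ∈ Set.Ico (0:ℝ) 1) (hβ₂ : β₂ ∈ Set.Ico (0:ℝ) 1)
    (g m v vhat : ℕ → Fin n → ℝ)
    (hm0 : ∀ i, m 0 i = 0) (hv0 : ∀ i, v 0 i = 0) (hvhat0 : ∀ i, vhat 0 i = 0)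
    (hm : ∀ k i, m (k+1) i = β₁ * m k i + (1 - β₁) * g (k+1) i)
    (hv : ∀ k i, v (k+1) i = β₂ * v k i + (1 - β₂) * (g (k+1) i)^2)
    (hvhat : ∀ k i, vhat (k+1) i = max (vhat k i) (v (k+1) i))
    (k : ℕ) (hk : 1 ≤ k) :
    (∑ i, (m k i)^2 / Real.sqrt (vhat k i))
      ≤ ((1 - β₁) / Real.sqrt (1 - β₂)) *
          ∑ j ∈ Finset.Icc 1 k, β₁ ^ (k - j) * (∑ i, |g j i|) := by
  have hmax (k i) : vhat k i ≤ vhat (k + 1) i ∧ v (k + 1) i ≤ vhat (k + 1) i :=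
    max_le_iff.mp (hvhat k i).ge
  exact stmt9_general univ (Set.Ico_subset_Icc_self hβ₁) hβ₂ (fun i _ => hm0 i)
    (fun i _ => (hv0 i).ge) (fun i _ k => hm k i) (fun i _ k => hv k i)
    (fun i _ => monotone_nat_of_le_succ fun k => (hmax k i).1) (fun i _ k => (hmax k i).2) k
end
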